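/- The logic of ⊞ is not self-extensional: for distinct variables p and q, {p} ⊢_⊞ p⊞p and {p⊞p} ⊢_⊞ p, yet {(p⊞p)⊞q} ⊬_⊞ p⊞q; hence replacement of interderivable subformulas fails for ⊢_⊞. -/

import Mathlib

/-- Formulas built from countably many propositional variables with a single
binary connective `⊞` (platypus). -/
inductive Fm : Type where
  | var : ℕ → Fm
  | pl : Fm → Fm → Fm
deriving DecidableEq

namespace Fm

/-- The set of propositional variables occurring in a formula. -/
def vars : Fm → Set ℕ
  | var n => {n}
  | pl a b => vars a ∪ vars b

/-- A `𝔅_⊞`-valuation: a two-valued function such that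
`v (φ ⊞ ψ) ∈ {min (v φ) (v ψ), max (v φ) (v ψ)}`. -/
def IsVal (v : Fm → Bool) : Prop :=
  ∀ a b : Fm, v (a.pl b) = (v a && v b) ∨ v (a.pl b) = (v a || v b)

/-- The multiple-conclusion consequence `Γ ⊩_⊞ Δ`. -/
def Mc (Γ Δ : Set Fm) : Prop :=
  ∀ v : Fm → Bool, IsVal v → (∀ φ ∈ Γ, v φ = true) → ∃ ψ ∈ Δ, v ψ = true

/-- The single-conclusion consequence `Γ ⊢_⊞ φ`. -/
def Sc (Γ : Set Fm) (φ : Fm) : Prop := Mc Γ {φ}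

end Fm

/-!
Every valuation gives `φ ⊞ φ` the value of `φ`, so the two are interderivable. But a valuation may
choose between minimum and maximum separately at each compound formula: if it gives `φ` and `ψ`
different values, it can be changed on large formulas only so as to take the minimum at `φ ⊞ ψ` and
the maximum at `(φ ⊞ φ) ⊞ ψ`.
-/

namespace Fm

variable {v : Fm → Bool} {Γ : Set Fm} {φ ψ : Fm}

theorem sc_iff : Sc Γ ψ ↔ ∀ v, IsVal v → (∀ φ ∈ Γ, v φ = true) → v ψ = true := by
  simp only [Sc, Mc, Set.mem_singleton_iff, exists_eq_left]

theorem sc_singleton_iff : Sc {φ} ψ ↔ ∀ v, IsVal v → v φ = true → v ψ = true := by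
  simp only [sc_iff, Set.mem_singleton_iff, forall_eq]

/-- Interderivability `φ ⊣⊢_⊞ ψ`, the relation that would be a congruence for `⊞` if `⊢_⊞` were
self-extensional. -/
def Interderivable (φ ψ : Fm) : Prop := Sc {φ} ψ ∧ Sc {ψ} φ

theorem interderivable_iff : Interderivable φ ψ ↔ ∀ v, IsVal v → v φ = v ψ := by
  rw [Interderivable, sc_singleton_iff, sc_singleton_iff]
  constructor
  · exact fun h v hv => Bool.eq_iff_iff.2 ⟨h.1 v hv, h.2 v hv⟩
  · exact fun h => ⟨fun v hv => (h v hv ▸ ·), fun v hv => (h v hv ▸ ·)⟩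

theorem IsVal.pl_of_eq (hv : IsVal v) (h : v φ = v ψ) : v (φ.pl ψ) = v ψ := by
  simpa only [h, Bool.and_self, Bool.or_self, or_self] using hv φ ψ

theorem interderivable_pl_self (φ : Fm) : Interderivable φ (φ.pl φ) :=
  interderivable_iff.2 fun _ hv => (hv.pl_of_eq rfl).symm

section VariableInclusion

open Classical in
theorem isVal_decide_vars_subset (s : Set ℕ) : IsVal fun φ => decide (φ.vars ⊆ s) :=
  fun a b => Or.inl <| by simp only [vars, Set.union_subset_iff, Bool.decide_and]

theorem Sc.vars_subset (h : Sc Γ ψ) : ψ.vars ⊆ ⋃ φ ∈ Γ, φ.vars := by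
  classical
  exact of_decide_eq_true <| sc_iff.1 h _ (isVal_decide_vars_subset _) fun φ hφ =>
    decide_eq_true (Set.subset_biUnion_of_mem hφ)

theorem not_interderivable_var {p q : ℕ} (hpq : p ≠ q) : ¬ Interderivable (var p) (var q) := by
  intro h
  have hsub : (var q).vars ⊆ (var p).vars := by
    simpa only [Set.biUnion_singleton] using h.1.vars_subset
  exact hpq (hsub rfl).symm

end VariableInclusion

section Override

open Classical in
/-- The function that agrees with `v` on `S` and on the variables, and that evaluates a compound
formula outside `S` by the minimum if it lies in `C` and by the maximum otherwise. It is used to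
prescribe the values of compound formulas while keeping those of their immediate subformulas. -/
noncomputable def override (v : Fm → Bool) (S C : Set Fm) : Fm → Bool
  | var n => v (var n)
  | pl a b =>
    if a.pl b ∈ S then v (a.pl b)
    else if a.pl b ∈ C then override v S C a && override v S C b
    else override v S C a || override v S C b

variable {S C : Set Fm}

theorem override_of_mem (h : φ ∈ S) : override v S C φ = v φ := by
  cases φ with
  | var n => rfl
  | pl a b => rw [override, if_pos h]

theorem override_pl_of_mem (hS : φ.pl ψ ∉ S) (hC : φ.pl ψ ∈ C) :
    override v S C (φ.pl ψ) = (override v S C φ && override v S C ψ) := by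
  rw [override, if_neg hS, if_pos hC]

theorem override_pl_of_notMem (hS : φ.pl ψ ∉ S) (hC : φ.pl ψ ∉ C) :
    override v S C (φ.pl ψ) = (override v S C φ || override v S C ψ) := by
  rw [override, if_neg hS, if_neg hC]

theorem IsVal.override (hv : IsVal v) (hS : ∀ a b : Fm, a.pl b ∈ S → a ∈ S ∧ b ∈ S) :
    IsVal (override v S C) := by
  intro a b
  by_cases habS : a.pl b ∈ S
  · obtain ⟨ha, hb⟩ := hS a b habS
    simpa only [override_of_mem habS, override_of_mem ha, override_of_mem hb] using hv a b
  by_cases habC : a.pl b ∈ C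
  · exact Or.inl (override_pl_of_mem habS habC)
  · exact Or.inr (override_pl_of_notMem habS habC)

end Override

theorem exists_isVal_pl_self_pl_ne (hv : IsVal v) (hne : v φ ≠ v ψ) :
    ∃ w, IsVal w ∧ w ((φ.pl φ).pl ψ) = true ∧ w (φ.pl ψ) = false := by
  let S : Set Fm := {χ | sizeOf χ ≤ max (sizeOf φ) (sizeOf ψ)}
  have mem_S (χ : Fm) : χ ∈ S ↔ sizeOf χ ≤ max (sizeOf φ) (sizeOf ψ) := Iff.rfl
  have pl_mem_S (a b : Fm) (hab : a.pl b ∈ S) : a ∈ S ∧ b ∈ S := by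
    simp only [mem_S, pl.sizeOf_spec] at hab ⊢
    lia
  have hpl : φ.pl ψ ∉ S := by
    simp only [mem_S, pl.sizeOf_spec]
    lia
  have hself_pl : (φ.pl φ).pl ψ ∉ S := by
    simp only [mem_S, pl.sizeOf_spec]
    lia
  have hself_pl_ne : (φ.pl φ).pl ψ ≠ φ.pl ψ := by
    intro h
    have hsize := congrArg sizeOf h
    simp only [pl.sizeOf_spec] at hsize
    lia
  let w := override v S {φ.pl ψ}
  have hw : IsVal w := hv.override pl_mem_S
  have hwφ : w φ = v φ := override_of_mem ((mem_S φ).2 (le_max_left _ _))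
  have hwψ : w ψ = v ψ := override_of_mem ((mem_S ψ).2 (le_max_right _ _))
  have hmin : w (φ.pl ψ) = (w φ && w ψ) := override_pl_of_mem hpl rfl
  have hmax : w ((φ.pl φ).pl ψ) = (w (φ.pl φ) || w ψ) :=
    override_pl_of_notMem hself_pl hself_pl_ne
  refine ⟨w, hw, ?_, ?_⟩
  · rw [hmax, hw.pl_of_eq rfl, hwφ, hwψ]
    grind
  · rw [hmin, hwφ, hwψ]
    grind

theorem sc_pl_self_pl_iff : Sc {(φ.pl φ).pl ψ} (φ.pl ψ) ↔ Interderivable φ ψ := by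
  rw [sc_singleton_iff, interderivable_iff]
  constructor
  · intro h v hv
    by_contra hne
    obtain ⟨w, hw, htrue, hfalse⟩ := exists_isVal_pl_self_pl_ne hv hne
    exact Bool.false_ne_true (hfalse.symm.trans (h w hw htrue))
  · intro h v hv htrue
    have hself : v (φ.pl φ) = v ψ := (hv.pl_of_eq rfl).trans (h v hv)
    rwa [hv.pl_of_eq (h v hv), ← hv.pl_of_eq hself]

end Fm

open Fm in
theorem platypus_not_self_extensional_general (φ ψ : Fm) :
    Sc {φ} (φ.pl φ) ∧ Sc {φ.pl φ} φ ∧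
    (Sc {(φ.pl φ).pl ψ} (φ.pl ψ) ↔ Interderivable φ ψ) :=
  ⟨(interderivable_pl_self φ).1, (interderivable_pl_self φ).2, sc_pl_self_pl_iff⟩

open Fm in
/-- `⊢_⊞` is not self-extensional: for distinct variables `p, q`,
`p` and `p ⊞ p` are interderivable, yet `(p ⊞ p) ⊞ q ⊬_⊞ p ⊞ q`. -/
theorem platypus_not_self_extensional (p q : ℕ) (hpq : p ≠ q) :
    Sc {Fm.var p} ((Fm.var p).pl (Fm.var p)) ∧
    Sc {(Fm.var p).pl (Fm.var p)} (Fm.var p) ∧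
    ¬ Sc {((Fm.var p).pl (Fm.var p)).pl (Fm.var q)} ((Fm.var p).pl (Fm.var q)) := by
  obtain ⟨hself, hself', hiff⟩ := platypus_not_self_extensional_general (var p) (var q)
  exact ⟨hself, hself', hiff.not.2 (not_interderivable_var hpq)⟩
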